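/- arXiv:cs/0701031 — 7 statements merged into one kernel-verified Lean document; each statement's English description precedes it below -/
import Mathlib

section
/- Let E be a congruence on the ground terms of L and let g be a family of construction functions that is valid with respect to E. Then the normalization function norm associated to g is a valid normalization function for E, i.e., E (norm t) t for every ground term t, and norm t = norm u whenever E t u. -/
open FirstOrder FirstOrder.Language

variable {L : Language}

/-- The normalization function associated to a family of construction functions `g`. -/
def normF (g : ∀ (n : ℕ), L.Functions n → (Fin n → L.Term Empty) → L.Term Empty) :
    L.Term Empty → L.Term Empty
  | .var x => x.elim
  | .func f ts => g _ f (fun i => normF g (ts i))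

/-- The set of values of a family of construction functions `g`. -/
inductive IsValue (g : ∀ (n : ℕ), L.Functions n → (Fin n → L.Term Empty) → L.Term Empty) :
    L.Term Empty → Prop
  | mk {n : ℕ} (f : L.Functions n) (vs : Fin n → L.Term Empty) :
      (∀ i, IsValue g (vs i)) → IsValue g (g n f vs)

/-- A family of construction functions `g` is valid with respect to `E`. -/
def ValidFamily (E : L.Term Empty → L.Term Empty → Prop)
    (g : ∀ (n : ℕ), L.Functions n → (Fin n → L.Term Empty) → L.Term Empty) : Prop :=
  (∀ (n : ℕ) (f : L.Functions n) (vs : Fin n → L.Term Empty),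
      (∀ i, IsValue g (vs i)) → E (g n f vs) (Term.func f vs)) ∧
  (∀ (n p : ℕ) (f : L.Functions n) (f' : L.Functions p)
      (vs : Fin n → L.Term Empty) (ws : Fin p → L.Term Empty),
      (∀ i, IsValue g (vs i)) → (∀ i, IsValue g (ws i)) →
      E (Term.func f vs) (Term.func f' ws) → g n f vs = g p f' ws)

theorem norm_of_valid_family_is_valid
    (E : L.Term Empty → L.Term Empty → Prop) (hE : Equivalence E)
    (hcong : ∀ (n : ℕ) (f : L.Functions n) (ts us : Fin n → L.Term Empty),
        (∀ i, E (ts i) (us i)) → E (Term.func f ts) (Term.func f us))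
    (g : ∀ (n : ℕ), L.Functions n → (Fin n → L.Term Empty) → L.Term Empty)
    (hg : ValidFamily E g) :
    (∀ t, E (normF g t) t) ∧ (∀ t u, E t u → normF g t = normF g u) := by
  have hv : ∀ t, IsValue g (normF g t) := by
    intro t
    induction t with
    | var x => exact x.elim
    | func f ts ih =>
      rw [normF]
      exact IsValue.mk f _ ih
  have key : ∀ t, E (normF g t) t := by
    intro t
    induction t with
    | var x => exact x.elim
    | func f ts ih =>
      rw [normF]
      exact hE.trans (hg.1 _ f _ (fun i => hv (ts i))) (hcong _ f _ _ ih)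
  refine ⟨key, ?_⟩
  intro t u h
  cases t with
  | var x => exact x.elim
  | func f ts =>
    cases u with
    | var x => exact x.elim
    | func f' us =>
      rw [normF, normF]
      refine hg.2 _ _ f f' _ _ (fun i => hv (ts i)) (fun i => hv (us i)) ?_
      exact hE.trans (hcong _ f _ _ (fun i => key (ts i)))
        (hE.trans h (hE.symm (hcong _ f' _ _ (fun i => key (us i)))))
end

section
/- Let r be a terminating and confluent binary relation on a type α. Then there exists a valid normalization function for the equivalence closure of r, i.e., a function h : α → α such that EqvGen r (h t) t for all t, and EqvGen r t u implies h t = h u. -/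
theorem exists_valid_norm_of_terminating_confluent {α : Type*} (r : α → α → Prop)
    (hterm : WellFounded (fun a b => r b a))
    (hconf : ∀ a b c, Relation.ReflTransGen r a b → Relation.ReflTransGen r a c →
        ∃ d, Relation.ReflTransGen r b d ∧ Relation.ReflTransGen r c d) :
    ∃ h : α → α, (∀ t, Relation.EqvGen r (h t) t) ∧ (∀ t u, Relation.EqvGen r t u → h t = h u) := by
  -- every element reduces to a normal form, by termination
  have hnf : ∀ t, ∃ n, Relation.ReflTransGen r t n ∧ ∀ m, ¬ r n m := by
    intro t
    induction t using hterm.induction with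
    | _ t ih =>
      by_cases ht : ∃ m, r t m
      · obtain ⟨m, hm⟩ := ht
        obtain ⟨n, hmn, hn⟩ := ih m hm
        exact ⟨n, Relation.ReflTransGen.head hm hmn, hn⟩
      · exact ⟨t, Relation.ReflTransGen.refl, fun m hm => ht ⟨m, hm⟩⟩
  have hstuck : ∀ n d, (∀ m, ¬ r n m) → Relation.ReflTransGen r n d → n = d := by
    intro n d hn hnd
    rcases Relation.ReflTransGen.cases_head hnd with h | ⟨c, hc, _⟩
    · exact h
    · exact absurd hc (hn c)
  choose h hred hnorm using hnf
  refine ⟨h, fun t => ?_, fun t u htu => ?_⟩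
  · have key : ∀ b, Relation.ReflTransGen r t b → Relation.EqvGen r t b := by
      intro b hb
      induction hb with
      | refl => exact Relation.EqvGen.refl _
      | tail _ hbc ih => exact Relation.EqvGen.trans _ _ _ ih (Relation.EqvGen.rel _ _ hbc)
    exact Relation.EqvGen.symm _ _ (key _ (hred t))
  · induction htu with
    | rel x y hxy =>
      -- both normal forms are reducts of x, so confluence identifies them
      obtain ⟨d, h1, h2⟩ := hconf x (h x) (h y) (hred x)
        (Relation.ReflTransGen.head hxy (hred y))
      exact (hstuck _ _ (hnorm x) h1).trans (hstuck _ _ (hnorm y) h2).symm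
    | refl x => rfl
    | symm x y _ ih => exact ih.symm
    | trans x y z _ _ ih1 ih2 => exact ih1.trans ih2
end

section
/- Let r be a confluent binary relation on the ground terms of a first-order language L, and let g be a family of construction functions such that for every function symbol f : L.Functions n and every tuple vs of values of g, one has r* (Term.func f vs) (g n f vs) and g n f vs is r-normal. Then g is valid with respect to the equivalence closure EqvGen r. -/
open FirstOrder FirstOrder.Language

variable {L : Language}

theorem valid_family_of_normalizing
    (r : L.Term Empty → L.Term Empty → Prop)
    (hconf : ∀ a b c, Relation.ReflTransGen r a b → Relation.ReflTransGen r a c →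
        ∃ d, Relation.ReflTransGen r b d ∧ Relation.ReflTransGen r c d)
    (g : ∀ (n : ℕ), L.Functions n → (Fin n → L.Term Empty) → L.Term Empty)
    (hg : ∀ (n : ℕ) (f : L.Functions n) (vs : Fin n → L.Term Empty),
        (∀ i, IsValue g (vs i)) →
        Relation.ReflTransGen r (Term.func f vs) (g n f vs) ∧ ¬∃ u, r (g n f vs) u) :
    ValidFamily (Relation.EqvGen r) g := by
  have church : ∀ a b, Relation.EqvGen r a b →
      ∃ d, Relation.ReflTransGen r a d ∧ Relation.ReflTransGen r b d := by
    intro a b h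
    induction h with
    | rel x y h => exact ⟨y, .single h, .refl⟩
    | refl x => exact ⟨x, .refl, .refl⟩
    | symm x y _ ih => obtain ⟨d, h1, h2⟩ := ih; exact ⟨d, h2, h1⟩
    | trans x y z _ _ ih1 ih2 =>
      obtain ⟨d, h1, h2⟩ := ih1
      obtain ⟨e, h3, h4⟩ := ih2
      obtain ⟨k, h5, h6⟩ := hconf y d e h2 h3
      exact ⟨k, h1.trans h5, h4.trans h6⟩
  have eqv : ∀ a b, Relation.ReflTransGen r a b → Relation.EqvGen r a b := by
    intro a b h
    induction h with
    | refl => exact .refl _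
    | tail _ h ih => exact .trans _ _ _ ih (.rel _ _ h)
  have nf : ∀ a b, (¬∃ u, r a u) → Relation.ReflTransGen r a b → a = b := by
    intro a b hn h
    rcases Relation.ReflTransGen.cases_head h with h | ⟨c, hc, _⟩
    · exact h
    · exact absurd ⟨c, hc⟩ hn
  refine ⟨fun n f vs hv => .symm _ _ (eqv _ _ (hg n f vs hv).1), ?_⟩
  intro n p f f' vs ws hv hw h
  obtain ⟨h1, n1⟩ := hg n f vs hv
  obtain ⟨h2, n2⟩ := hg p f' ws hw
  obtain ⟨d, h3, h4⟩ := church _ _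
    (.trans _ _ _ (.symm _ _ (eqv _ _ h1)) (.trans _ _ _ h (eqv _ _ h2)))
  exact (nf _ _ n1 h3).trans (nf _ _ n2 h4).symm
end

section
/- Let r be a confluent binary relation on α, and let a, b, a', b' : α be such that r* a a', r* b b', and a' and b' are r-normal. Then EqvGen r a b holds if and only if a' = b'. -/
theorem eqvGen_iff_normal_forms_eq {α : Type*} (r : α → α → Prop)
    (hconf : ∀ a b c, Relation.ReflTransGen r a b → Relation.ReflTransGen r a c →
        ∃ d, Relation.ReflTransGen r b d ∧ Relation.ReflTransGen r c d)
    (a b a' b' : α)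
    (ha : Relation.ReflTransGen r a a') (hb : Relation.ReflTransGen r b b')
    (ha' : ¬∃ c, r a' c) (hb' : ¬∃ c, r b' c) :
    Relation.EqvGen r a b ↔ a' = b' := by
  have aux : ∀ x y, Relation.EqvGen r x y →
      ∃ d, Relation.ReflTransGen r x d ∧ Relation.ReflTransGen r y d := by
    intro x y h
    induction h with
    | rel x y h => exact ⟨y, .single h, .refl⟩
    | refl x => exact ⟨x, .refl, .refl⟩
    | symm x y _ ih =>
      obtain ⟨d, h1, h2⟩ := ih
      exact ⟨d, h2, h1⟩
    | trans x y z _ _ ih1 ih2 =>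
      obtain ⟨d, h1, h2⟩ := ih1
      obtain ⟨e, h3, h4⟩ := ih2
      obtain ⟨f, h5, h6⟩ := hconf y d e h2 h3
      exact ⟨f, h1.trans h5, h4.trans h6⟩
  have nf : ∀ x y, (¬∃ c, r x c) → Relation.ReflTransGen r x y → x = y := by
    intro x y hx h
    rcases Relation.ReflTransGen.cases_head h with h | ⟨c, hc, _⟩
    · exact h
    · exact absurd ⟨c, hc⟩ hx
  have ea := Relation.EqvGen.reflTransGen_le_eqvGen r a a' ha
  have eb := Relation.EqvGen.reflTransGen_le_eqvGen r b b' hb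
  constructor
  · intro h
    obtain ⟨d, h1, h2⟩ := aux a' b' (.trans _ _ _ (.symm _ _ ea) (.trans _ _ _ h eb))
    exact (nf _ _ ha' h1).trans (nf _ _ hb' h2).symm
  · intro h
    subst h
    exact .trans _ _ _ ea (.symm _ _ eb)
end

section
/- Let α be a linearly ordered type. For every t : FreeMagma α there exists a nonempty list that is sorted in nondecreasing order with respect to ≤, whose multiset of elements equals leaves t, and whose right comb is acCon-equivalent to t: there exist a : α and l : List α with (a :: l) sorted nondecreasing, Multiset.ofList (a :: l) = leaves t, and acCon t (rightComb a l). -/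
variable {α : Type*}

/-- The AC-congruence on the free magma: the smallest equivalence relation compatible
with multiplication containing commutativity and associativity pairs. -/
inductive acCon : FreeMagma α → FreeMagma α → Prop
  | comm (x y : FreeMagma α) : acCon (x * y) (y * x)
  | assoc (x y z : FreeMagma α) : acCon (x * y * z) (x * (y * z))
  | refl (t : FreeMagma α) : acCon t t
  | symm {t u : FreeMagma α} : acCon t u → acCon u t
  | trans {t u v : FreeMagma α} : acCon t u → acCon u v → acCon t v
  | mul {t t' u u' : FreeMagma α} : acCon t t' → acCon u u' → acCon (t * u) (t' * u')

/-- The multiset of leaves of a term of the free magma. -/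
def leaves : FreeMagma α → Multiset α
  | FreeMagma.of a => {a}
  | FreeMagma.mul t u => leaves t + leaves u

/-- The right comb associated to a nonempty list. -/
def rightComb : α → List α → FreeMagma α
  | a, [] => FreeMagma.of a
  | a, b :: l => FreeMagma.of a * rightComb b l

theorem ac_insert [LinearOrder α] (a : α) (l : List α) : ∀ b : α,
    List.Pairwise (· ≤ ·) (b :: l) →
    ∃ (c : α) (m : List α), List.Pairwise (· ≤ ·) (c :: m) ∧
      (↑(c :: m) : Multiset α) = a ::ₘ (↑(b :: l) : Multiset α) ∧
      acCon (FreeMagma.of a * rightComb b l) (rightComb c m) := by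
  induction l with
  | nil =>
    intro b _
    rcases le_total a b with h | h
    · exact ⟨a, [b], by simp [h], rfl, acCon.refl _⟩
    · exact ⟨b, [a], by simp [h], Multiset.cons_swap b a 0, acCon.comm _ _⟩
  | cons d l ih =>
    intro b hs
    rcases le_total a b with h | h
    · refine ⟨a, b :: d :: l, ?_, rfl, acCon.refl _⟩
      refine List.pairwise_cons.2 ⟨?_, hs⟩
      intro x hx
      rcases List.mem_cons.1 hx with rfl | hx
      · exact h
      · exact h.trans ((List.pairwise_cons.1 hs).1 x hx)
    · have hs' := List.pairwise_cons.1 hs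
      obtain ⟨c, m, h1, h2, h3⟩ := ih d hs'.2
      refine ⟨b, c :: m, List.pairwise_cons.2 ⟨?_, h1⟩, ?_, ?_⟩
      · intro x hx
        have hx' : x ∈ (↑(c :: m) : Multiset α) := hx
        rw [h2] at hx'
        rcases Multiset.mem_cons.1 hx' with rfl | hx'
        · exact h
        · exact hs'.1 x hx'
      · rw [← Multiset.cons_coe b (c :: m), h2, Multiset.cons_swap, Multiset.cons_coe b]
      · exact ((acCon.assoc _ _ _).symm.trans
          ((acCon.comm _ _).mul (acCon.refl _))).trans
          ((acCon.assoc _ _ _).trans ((acCon.refl _).mul h3))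

theorem ac_merge [LinearOrder α] (b : α) (m : List α)
    (hs : List.Pairwise (· ≤ ·) (b :: m)) (l : List α) : ∀ a : α,
    ∃ (c : α) (k : List α), List.Pairwise (· ≤ ·) (c :: k) ∧
      (↑(c :: k) : Multiset α) = (↑(a :: l) : Multiset α) + (↑(b :: m) : Multiset α) ∧
      acCon (rightComb a l * rightComb b m) (rightComb c k) := by
  induction l with
  | nil => exact fun a => ac_insert a m b hs
  | cons d l ih =>
    intro a
    obtain ⟨c, k, h1, h2, h3⟩ := ih d
    obtain ⟨c', k', h1', h2', h3'⟩ := ac_insert a k c h1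
    refine ⟨c', k', h1', ?_, ?_⟩
    · rw [h2', h2, ← Multiset.cons_coe a (d :: l), Multiset.cons_add]
    · exact (acCon.assoc _ _ _).trans (((acCon.refl _).mul h3).trans h3')

theorem exists_sorted_rightComb [LinearOrder α] (t : FreeMagma α) :
    ∃ (a : α) (l : List α), List.Pairwise (· ≤ ·) (a :: l) ∧
      (↑(a :: l) : Multiset α) = leaves t ∧ acCon t (rightComb a l) := by
  induction t with
  | ih1 a => exact ⟨a, [], by simp, rfl, acCon.refl _⟩
  | ih2 t u iht ihu =>
    obtain ⟨a, l, _, h2, h3⟩ := iht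
    obtain ⟨b, m, k1, k2, k3⟩ := ihu
    obtain ⟨c, k, r1, r2, r3⟩ := ac_merge b m k1 l a
    refine ⟨c, k, r1, ?_, (h3.mul k3).trans r3⟩
    rw [r2, h2, k2]
    rfl
end

section
/- For all t u : FreeMagma α, acCon t u holds if and only if leaves t = leaves u as multisets over α. -/
variable {α : Type*}

/-- The AC-congruence as a setoid. -/
def acSetoidAux (α : Type*) : Setoid (FreeMagma α) :=
  ⟨acCon, acCon.refl, acCon.symm, acCon.trans⟩

/-- The quotient by the AC-congruence is a commutative semigroup. -/
def acSemigroupAux (α : Type*) : CommSemigroup (Quotient (acSetoidAux α)) where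
  mul := Quotient.map₂ (· * ·) (fun _ _ h _ _ h' => acCon.mul h h')
  mul_assoc := by
    rintro ⟨x⟩ ⟨y⟩ ⟨z⟩
    exact Quotient.sound (acCon.assoc x y z)
  mul_comm := by
    rintro ⟨x⟩ ⟨y⟩
    exact Quotient.sound (acCon.comm x y)

theorem leaves_mul_aux {α : Type*} (t u : FreeMagma α) :
    leaves (t * u) = leaves t + leaves u := rfl

theorem acCon_leaves_aux {α : Type*} {t u : FreeMagma α} (h : acCon t u) :
    leaves t = leaves u := by
  induction h with
  | comm x y => simp only [leaves_mul_aux, add_comm]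
  | assoc x y z => simp only [leaves_mul_aux, add_assoc]
  | refl t => rfl
  | symm _ ih => exact ih.symm
  | trans _ _ ih ih' => exact ih.trans ih'
  | mul _ _ ih ih' => simp only [leaves_mul_aux, ih, ih']

theorem leaves_acCon_aux {α : Type*} {t u : FreeMagma α} (h : leaves t = leaves u) :
    acCon t u := by
  letI := acSemigroupAux α
  have key : ∀ t : FreeMagma α, ((leaves t).map (fun a =>
      ((Quotient.mk (acSetoidAux α) (FreeMagma.of a) : Quotient (acSetoidAux α)) :
        WithOne (Quotient (acSetoidAux α))))).prod
      = ((Quotient.mk (acSetoidAux α) t : Quotient (acSetoidAux α)) :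
        WithOne (Quotient (acSetoidAux α))) := by
    intro t
    induction t with
    | ih1 a => simp [leaves]
    | ih2 x y hx hy =>
      rw [leaves_mul_aux, Multiset.map_add, Multiset.prod_add, hx, hy, ← WithOne.coe_mul]
      rfl
  have h2 := key t
  rw [h, key u] at h2
  exact Quotient.exact (WithOne.coe_inj.1 h2.symm)

theorem acCon_iff_leaves_eq (t u : FreeMagma α) :
    acCon t u ↔ leaves t = leaves u := by
  exact ⟨acCon_leaves_aux, leaves_acCon_aux⟩
end

section
/- The relation assocL on FreeMagma α is confluent: if assocL* t u and assocL* t v then there exists w with assocL* u w and assocL* v w, where assocL* denotes the reflexive-transitive closure of assocL. -/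
variable {α : Type*}

/-- One step of left-reassociation in the free magma, closed under contexts. -/
inductive assocL : FreeMagma α → FreeMagma α → Prop
  | rot (t u v : FreeMagma α) : assocL (t * (u * v)) ((t * u) * v)
  | mulLeft {t t' : FreeMagma α} (u : FreeMagma α) : assocL t t' → assocL (t * u) (t' * u)
  | mulRight {t t' : FreeMagma α} (u : FreeMagma α) : assocL t t' → assocL (u * t) (u * t')


def asApp {α : Type*} : FreeMagma α → FreeMagma α → FreeMagma α
  | s, .of a => s * .of a
  | s, .mul t u => asApp (asApp s t) u

def asNf {α : Type*} : FreeMagma α → FreeMagma α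
  | .of a => .of a
  | .mul t u => asApp (asNf t) u

theorem as_left {α : Type*} {t t' : FreeMagma α} (u : FreeMagma α)
    (h : Relation.ReflTransGen assocL t t') :
    Relation.ReflTransGen assocL (t * u) (t' * u) :=
  Relation.ReflTransGen.lift (fun x => x * u) (fun _ _ h => assocL.mulLeft u h) _ _ h

theorem as_app {α : Type*} (t : FreeMagma α) : ∀ s : FreeMagma α,
    Relation.ReflTransGen assocL (s * t) (asApp s t) := by
  induction t with
  | ih1 a => intro s; exact .refl
  | ih2 t u iht ihu =>
    intro s
    exact .head (assocL.rot s t u) ((as_left u (iht s)).trans (ihu _))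

theorem as_nf {α : Type*} (t : FreeMagma α) :
    Relation.ReflTransGen assocL t (asNf t) := by
  induction t with
  | ih1 a => exact .refl
  | ih2 t u iht ihu => exact (as_left u iht).trans (as_app u _)

theorem as_inv {α : Type*} {t t' : FreeMagma α} (h : assocL t t') :
    asNf t = asNf t' ∧ ∀ s, asApp s t = asApp s t' := by
  induction h with
  | rot t u v => exact ⟨rfl, fun _ => rfl⟩
  | mulLeft u _ ih =>
    exact ⟨congrArg (fun x => asApp x u) ih.1, fun s => congrArg (fun x => asApp x u) (ih.2 s)⟩
  | mulRight u _ ih => exact ⟨ih.2 _, fun s => ih.2 _⟩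

theorem as_inv_star {α : Type*} {t t' : FreeMagma α} (h : Relation.ReflTransGen assocL t t') :
    asNf t = asNf t' := by
  induction h with
  | refl => rfl
  | tail _ h ih => exact ih.trans (as_inv h).1

theorem assocL_confluent (t u v : FreeMagma α)
    (htu : Relation.ReflTransGen assocL t u) (htv : Relation.ReflTransGen assocL t v) :
    ∃ w, Relation.ReflTransGen assocL u w ∧ Relation.ReflTransGen assocL v w := by
  refine ⟨asNf t, ?_, ?_⟩
  · rw [as_inv_star htu]; exact as_nf u
  · rw [as_inv_star htv]; exact as_nf v
end
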